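/- Fix integers k1 ≥ 2, k2 ≥ 2 and set k := min{k1,k2}. Fix reals ε > 0 and C1 > max{k1,k2} + ε. Then there exists a constant C > 0 such that for all positive integers N and M with (max{k1,k2} + ε)·N ≤ M ≤ C1·N, the number of (k1,k2)-dicores on vertex set {1,…,N} with M edges that are NOT strongly connected is at most C · N^{-2(k-1)} times the total number of (k1,k2)-dicores on {1,…,N} with M edges. Equivalently, a uniformly random (k1,k2)-dicore with N vertices and M edges is strongly connected with probability 1 − O(N^{-2(k-1)}). -/

import Mathlib

/-- A `(k1,k2)`-dicore on vertex set `Fin N` with `M` edges: a simple digraph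
(edges are ordered pairs of distinct vertices; a `Finset` has no repeated edges)
with exactly `M` edges, minimum in-degree `≥ k1` and minimum out-degree `≥ k2`. -/
def IsDicore (k1 k2 N M : ℕ) (E : Finset (Fin N × Fin N)) : Prop :=
  E.card = M ∧ (∀ e ∈ E, e.1 ≠ e.2) ∧
    ∀ v : Fin N,
      k1 ≤ (E.filter (fun e => e.2 = v)).card ∧
      k2 ≤ (E.filter (fun e => e.1 = v)).card

/-- A digraph is strongly connected if every ordered pair of vertices is joined
by a directed path. -/
def StronglyConnected {N : ℕ} (E : Finset (Fin N × Fin N)) : Prop :=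
  ∀ u v : Fin N, Relation.ReflTransGen (fun a b => (a, b) ∈ E) u v

/-!
If a dicore is not strongly connected, some vertex `u` does not reach some vertex `v`. All degrees
may be assumed to be at most `N ^ (1/32)`: a large in-degree leaves many ways to redirect an edge
elsewhere, and few ways to undo this, so dicores with a large in-degree are rare. Explore `2 * m`
vertices, `m ≈ N ^ (3/4)`, along out-edges from `u` and along in-edges to `v`. Unless one of the
explorations gets stuck in a small closed set or expands badly, both frontiers have at least `m`
vertices, and no edge joins the first frontier to the second.

Replacing edges `(a, b)`, `(c, d)` by `(a, d)`, `(c, b)` preserves all degrees. With `a` and `d` in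
the two frontiers this switching does not disturb the explorations and creates an edge between the
frontiers. Counting the switchings both ways, `j` times in succession, bounds the proportion of
dicores with separated frontiers by `O((N / m ^ 2) ^ j)`, smaller than any power of `1 / N`.

Between a fixed set and the complement of a fixed set containing it, the same switching bounds the
obstructions to expansion. Among these, all but the closed sets of bounded size are again
superpolynomially rare; as there are no loops, a closed set has more than `k2 ≥ 2` vertices, and
closed sets of at least three vertices have probability `O(N ^ (-2 * (k2 - 1)))`. Reversing all
edges gives the same for in-edges with `k1`.
-/

open Finset

section Counting

variable {α β γ δ : Type*}

theorem card_mul_le_card_mul_of_injOn {s : Finset α} {t : Finset β} {F : α → Finset γ}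
    {G : β → Finset δ} {f g : ℕ} (φ : α × γ → β × δ)
    (hmaps : Set.MapsTo φ {p | p.1 ∈ s ∧ p.2 ∈ F p.1} {q | q.1 ∈ t ∧ q.2 ∈ G q.1})
    (hinj : Set.InjOn φ {p | p.1 ∈ s ∧ p.2 ∈ F p.1})
    (hf : ∀ a ∈ s, f ≤ #(F a)) (hg : ∀ b ∈ t, #(G b) ≤ g) : #s * f ≤ #t * g := by
  have hsigma : #(s.sigma F) ≤ #(t.sigma G) := by
    refine card_le_card_of_injOn
      (fun p => ⟨(φ (p.1, p.2)).1, (φ (p.1, p.2)).2⟩) (fun p hp => ?_) fun p hp q hq hpq => ?_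
    · exact mem_coe.2 (mem_sigma.2 (hmaps (mem_sigma.1 (mem_coe.1 hp))))
    · simp only [Sigma.mk.injEq, heq_eq_eq] at hpq
      have := hinj (mem_sigma.1 (mem_coe.1 hp)) (mem_sigma.1 (mem_coe.1 hq)) (Prod.ext hpq.1 hpq.2)
      grind
  calc #s * f ≤ ∑ a ∈ s, #(F a) := card_nsmul_le_sum _ _ _ hf
    _ = #(s.sigma F) := (card_sigma _ _).symm
    _ ≤ #(t.sigma G) := hsigma
    _ = ∑ b ∈ t, #(G b) := card_sigma _ _
    _ ≤ #t * g := sum_le_card_nsmul _ _ _ hg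

theorem card_filter_mem_le_mul [DecidableEq β] {s : Finset α} {t : Finset β} {g : α → β} {D : ℕ}
    (h : ∀ b ∈ t, #{a ∈ s | g a = b} ≤ D) : #{a ∈ s | g a ∈ t} ≤ #t * D :=
  sum_card_fiberwise_eq_card_filter s t g ▸ sum_le_card_nsmul _ _ _ h

theorem mul_le_card_filter_mem [DecidableEq β] {s : Finset α} {t : Finset β} {g : α → β} {D : ℕ}
    (h : ∀ b ∈ t, D ≤ #{a ∈ s | g a = b}) : #t * D ≤ #{a ∈ s | g a ∈ t} :=
  sum_card_fiberwise_eq_card_filter s t g ▸ card_nsmul_le_sum _ _ _ h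

theorem card_filter_sdiff_union_add [DecidableEq α] {s x y : Finset α} (hy : y ⊆ s)
    (hx : Disjoint s x) (p : α → Prop) [DecidablePred p] :
    #{a ∈ (s \ y) ∪ x | p a} + #{a ∈ y | p a} = #{a ∈ s | p a} + #{a ∈ x | p a} := by
  have hdisj : Disjoint (s \ y) x := hx.mono_left sdiff_subset
  simp only [card_filter, sum_union hdisj, ← sum_sdiff hy]
  ring

theorem choose_le_three_mul_div_pow (n : ℕ) {r : ℕ} (hr : 0 < r) :
    (n.choose r : ℝ) ≤ (3 * n / r) ^ r := by
  have hr' : (0 : ℝ) < r := by exact_mod_cast hr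
  have hexp : (r : ℝ) ^ r / r.factorial ≤ 3 ^ r := calc
    (r : ℝ) ^ r / r.factorial ≤ Real.exp r := Real.pow_div_factorial_le_exp _ hr'.le _
    _ = Real.exp 1 ^ r := by rw [← Real.exp_nat_mul, mul_one]
    _ ≤ 3 ^ r := by gcongr; exact Real.exp_one_lt_three.le
  calc (n.choose r : ℝ) ≤ (n : ℝ) ^ r / r.factorial := Nat.choose_le_pow_div r n
    _ = (n / r : ℝ) ^ r * ((r : ℝ) ^ r / r.factorial) := by rw [div_pow]; field_simp
    _ ≤ (n / r : ℝ) ^ r * 3 ^ r := by gcongr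
    _ = (3 * n / r) ^ r := by rw [← mul_pow]; ring

end Counting

section Digraph

variable {V : Type*} [DecidableEq V]

/-- The number of edges with head `v`, for a digraph given as its set of edges. -/
def inDegree (E : Finset (V × V)) (v : V) : ℕ := #{e ∈ E | e.2 = v}

/-- The number of edges with tail `v`, for a digraph given as its set of edges. -/
def outDegree (E : Finset (V × V)) (v : V) : ℕ := #{e ∈ E | e.1 = v}

/-- All in-degrees and out-degrees are at most `D`. -/
def MaxDegreeLE (E : Finset (V × V)) (D : ℕ) : Prop :=
  ∀ v, inDegree E v ≤ D ∧ outDegree E v ≤ D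

/-- The set of tails of the edges with head `v`. -/
def inNeighbors (E : Finset (V × V)) (v : V) : Finset V := {e ∈ E | e.2 = v}.image Prod.fst

/-- The set of heads of the edges with tail `v`. -/
def outNeighbors (E : Finset (V × V)) (v : V) : Finset V := {e ∈ E | e.1 = v}.image Prod.snd

/-- The number of edges from `A` to `B`. -/
def edgeCount (E : Finset (V × V)) (A B : Finset V) : ℕ := #{e ∈ E | e.1 ∈ A ∧ e.2 ∈ B}

/-- The digraph with all edges reversed. -/
def reverseEdges (E : Finset (V × V)) : Finset (V × V) := E.image Prod.swap

variable {E : Finset (V × V)} {A B : Finset V} {D : ℕ}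

theorem mem_inNeighbors {a v : V} : a ∈ inNeighbors E v ↔ (a, v) ∈ E := by
  simp [inNeighbors]

theorem mem_outNeighbors {b v : V} : b ∈ outNeighbors E v ↔ (v, b) ∈ E := by
  simp [outNeighbors]

theorem card_inNeighbors (E : Finset (V × V)) (v : V) : #(inNeighbors E v) = inDegree E v :=
  card_image_of_injOn fun e he f hf hef => by
    simp only [coe_filter, Set.mem_ofPred_eq] at he hf
    exact Prod.ext hef (he.2.trans hf.2.symm)

theorem card_outNeighbors (E : Finset (V × V)) (v : V) : #(outNeighbors E v) = outDegree E v :=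
  card_image_of_injOn fun e he f hf hef => by
    simp only [coe_filter, Set.mem_ofPred_eq] at he hf
    exact Prod.ext (he.2.trans hf.2.symm) hef

theorem MaxDegreeLE.card_filter_head_le (h : MaxDegreeLE E D) (S : Finset V) :
    #{e ∈ E | e.2 ∈ S} ≤ #S * D :=
  card_filter_mem_le_mul fun v _ => (h v).1

theorem MaxDegreeLE.card_filter_tail_le (h : MaxDegreeLE E D) (S : Finset V) :
    #{e ∈ E | e.1 ∈ S} ≤ #S * D :=
  card_filter_mem_le_mul fun v _ => (h v).2

theorem edgeCount_eq_zero_iff : edgeCount E A B = 0 ↔ ∀ a ∈ A, ∀ b ∈ B, (a, b) ∉ E := by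
  simp only [edgeCount, card_eq_zero, filter_eq_empty_iff, Prod.forall]
  grind

theorem mem_reverseEdges {a b : V} : (a, b) ∈ reverseEdges E ↔ (b, a) ∈ E := by
  simp [reverseEdges]

theorem reverseEdges_reverseEdges (E : Finset (V × V)) : reverseEdges (reverseEdges E) = E := by
  ext ⟨a, b⟩
  simp only [mem_reverseEdges]

theorem card_filter_reverseEdges (E : Finset (V × V)) (p : V × V → Prop) [DecidablePred p] :
    #{e ∈ reverseEdges E | p e} = #{e ∈ E | p e.swap} := by
  rw [reverseEdges, filter_image, card_image_of_injective _ Prod.swap_injective]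

theorem inDegree_reverseEdges (E : Finset (V × V)) (v : V) :
    inDegree (reverseEdges E) v = outDegree E v :=
  card_filter_reverseEdges E _

theorem outDegree_reverseEdges (E : Finset (V × V)) (v : V) :
    outDegree (reverseEdges E) v = inDegree E v :=
  card_filter_reverseEdges E _

theorem MaxDegreeLE.reverseEdges (h : MaxDegreeLE E D) : MaxDegreeLE (reverseEdges E) D :=
  fun v => ⟨inDegree_reverseEdges E v ▸ (h v).2, outDegree_reverseEdges E v ▸ (h v).1⟩

end Digraph

section Switching

variable {V : Type*} [DecidableEq V]

/-- The pair `(a, b)`, `(c, d)` of edges turned into `(a, d)`, `(c, b)`. -/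
def swapHeads (q : (V × V) × (V × V)) : (V × V) × (V × V) := ((q.1.1, q.2.2), (q.2.1, q.1.2))

/-- The digraph with the edges `(a, b)`, `(c, d)` of `q` replaced by `(a, d)`, `(c, b)`. -/
def switchEdges (E : Finset (V × V)) (q : (V × V) × (V × V)) : Finset (V × V) :=
  (E \ {q.1, q.2}) ∪ {(swapHeads q).1, (swapHeads q).2}

/-- The edges `(a, b)`, `(c, d)` of `E` can be switched without creating a loop at `b` or a repeated
edge, and exactly one of the new edges, namely `(a, d)`, goes from `A` to `B`. -/
structure Switchable (E : Finset (V × V)) (A B : Finset V) (q : (V × V) × (V × V)) : Prop where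
  fst_mem : q.1 ∈ E
  snd_mem : q.2 ∈ E
  tail_mem : q.1.1 ∈ A
  head_notMem : q.1.2 ∉ B
  tail_notMem : q.2.1 ∉ A
  head_mem : q.2.2 ∈ B
  fst_new : (q.1.1, q.2.2) ∉ E
  snd_new : (q.2.1, q.1.2) ∉ E
  not_loop : q.2.1 ≠ q.1.2

variable {E : Finset (V × V)} {A B : Finset V} {q : (V × V) × (V × V)} {D : ℕ}

theorem mem_switchEdges {e : V × V} :
    e ∈ switchEdges E q ↔
      (e ∈ E ∧ e ≠ q.1 ∧ e ≠ q.2) ∨ e = (q.1.1, q.2.2) ∨ e = (q.2.1, q.1.2) := by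
  simp only [switchEdges, swapHeads, mem_union, mem_sdiff, mem_insert, mem_singleton, not_or]

namespace Switchable

theorem card_filter_add (h : Switchable E A B q) (p : V × V → Prop) [DecidablePred p] :
    #{e ∈ switchEdges E q | p e} + ((if p q.1 then 1 else 0) + (if p q.2 then 1 else 0)) =
      #{e ∈ E | p e} +
        ((if p (q.1.1, q.2.2) then 1 else 0) + (if p (q.2.1, q.1.2) then 1 else 0)) := by
  have htails : q.1.1 ≠ q.2.1 := fun heq => h.tail_notMem (heq ▸ h.tail_mem)
  have hne_old : q.1 ≠ q.2 := ne_of_apply_ne Prod.fst htails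
  have hne_new : (swapHeads q).1 ≠ (swapHeads q).2 := ne_of_apply_ne Prod.fst htails
  have hold : {q.1, q.2} ⊆ E := by simp [insert_subset_iff, h.fst_mem, h.snd_mem]
  have hnew : Disjoint E {(swapHeads q).1, (swapHeads q).2} := by
    simp [swapHeads, h.fst_new, h.snd_new]
  have hcard := card_filter_sdiff_union_add hold hnew p
  rwa [card_filter p {q.1, q.2}, card_filter p {(swapHeads q).1, (swapHeads q).2},
    sum_pair hne_old, sum_pair hne_new] at hcard

theorem card_eq (h : Switchable E A B q) : #(switchEdges E q) = #E := by
  simpa using h.card_filter_add fun _ => True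

theorem inDegree_eq (h : Switchable E A B q) (v : V) :
    inDegree (switchEdges E q) v = inDegree E v := by
  have := h.card_filter_add fun e => e.2 = v
  simp only at this
  unfold inDegree
  lia

theorem outDegree_eq (h : Switchable E A B q) (v : V) :
    outDegree (switchEdges E q) v = outDegree E v := by
  have := h.card_filter_add fun e => e.1 = v
  simp only at this
  unfold outDegree
  lia

theorem edgeCount_eq (h : Switchable E A B q) :
    edgeCount (switchEdges E q) A B = edgeCount E A B + 1 := by
  simpa [edgeCount, h.tail_mem, h.head_notMem, h.tail_notMem, h.head_mem] using
    h.card_filter_add fun e => e.1 ∈ A ∧ e.2 ∈ B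

theorem switchEdges_swapHeads (h : Switchable E A B q) :
    switchEdges (switchEdges E q) (swapHeads q) = E := by
  have hold : {q.1, q.2} ⊆ E := by simp [insert_subset_iff, h.fst_mem, h.snd_mem]
  have hnew : Disjoint E {(swapHeads q).1, (swapHeads q).2} := by
    simp [swapHeads, h.fst_new, h.snd_new]
  change (((E \ {q.1, q.2}) ∪ _) \ {(swapHeads q).1, (swapHeads q).2}) ∪ {q.1, q.2} = E
  rw [union_sdiff_cancel_right (hnew.mono_left sdiff_subset), sdiff_union_of_subset hold]

theorem maxDegreeLE (h : Switchable E A B q) (hE : MaxDegreeLE E D) :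
    MaxDegreeLE (switchEdges E q) D :=
  fun v => ⟨(h.inDegree_eq v).trans_le (hE v).1, (h.outDegree_eq v).trans_le (hE v).2⟩

end Switchable

open scoped Classical in
theorem MaxDegreeLE.card_filter_head_le_card_switchable_add (hE : MaxDegreeLE E D) {e : V × V}
    (he : e ∈ E) (htail : e.1 ∈ A) (hhead : e.2 ∉ B) :
    #{f ∈ E | f.2 ∈ B} ≤ #{f ∈ E | Switchable E A B (e, f)} + (edgeCount E A B + 3 * D ^ 2) := by
  set O := outNeighbors E e.1
  set I := insert e.2 (inNeighbors E e.2)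
  have hO : #{f ∈ E | f.2 ∈ O} ≤ D * D :=
    (hE.card_filter_head_le O).trans
      (Nat.mul_le_mul_right D ((card_outNeighbors E e.1).trans_le (hE e.1).2))
  have hI : #{f ∈ E | f.1 ∈ I} ≤ (D + 1) * D :=
    (hE.card_filter_tail_le I).trans (Nat.mul_le_mul_right D ((card_insert_le _ _).trans
      (Nat.succ_le_succ ((card_inNeighbors E e.2).trans_le (hE e.2).1))))
  have hcover : {f ∈ E | f.2 ∈ B} ⊆ {f ∈ E | Switchable E A B (e, f)} ∪
      ({f ∈ E | f.1 ∈ A ∧ f.2 ∈ B} ∪ ({f ∈ E | f.2 ∈ O} ∪ {f ∈ E | f.1 ∈ I})) := by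
    intro f hf
    obtain ⟨hfE, hfB⟩ := mem_filter.1 hf
    simp only [mem_union, mem_filter, hfE, hfB, true_and, and_true]
    by_contra! hnot
    obtain ⟨hnsw, hfA, hfO, hfI⟩ := hnot
    simp only [I, O, mem_insert, mem_inNeighbors, mem_outNeighbors, not_or] at hfO hfI
    exact hnsw ⟨he, hfE, htail, hhead, hfA, hfB, hfO, hfI.2, hfI.1⟩
  have hD : D ≤ D * D := Nat.le_mul_self D
  calc _ ≤ _ := card_le_card hcover
    _ ≤ #{f ∈ E | Switchable E A B (e, f)} + (edgeCount E A B + (D * D + (D + 1) * D)) := by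
        refine (card_union_le _ _).trans (add_le_add_right ((card_union_le _ _).trans ?_) _)
        exact add_le_add_right ((card_union_le _ _).trans (add_le_add hO hI)) _
    _ ≤ _ := by lia

open scoped Classical in
theorem MaxDegreeLE.le_card_switchable (hE : MaxDegreeLE E D) (A B : Finset V) :
    (#{e ∈ E | e.1 ∈ A} - edgeCount E A B) * (#{e ∈ E | e.2 ∈ B} - edgeCount E A B - 3 * D ^ 2) ≤
      #{q ∈ E ×ˢ E | Switchable E A B q} := by
  have hsplit : #{e ∈ E | e.1 ∈ A} - edgeCount E A B = #{e ∈ E | e.1 ∈ A ∧ e.2 ∉ B} := by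
    have := card_filter_add_card_filter_not (s := {e ∈ E | e.1 ∈ A}) fun e => e.2 ∈ B
    simp only [filter_filter] at this
    unfold edgeCount
    lia
  calc _ ≤ ∑ e ∈ E with e.1 ∈ A ∧ e.2 ∉ B, #{f ∈ E | Switchable E A B (e, f)} := by
        rw [hsplit]
        refine card_nsmul_le_sum _ _ _ fun e he => ?_
        obtain ⟨heE, htail, hhead⟩ := mem_filter.1 he
        have := hE.card_filter_head_le_card_switchable_add heE htail hhead
        lia
    _ ≤ ∑ e ∈ E, #{f ∈ E | Switchable E A B (e, f)} := sum_le_sum_of_subset (filter_subset _ _)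
    _ = #{q ∈ E ×ˢ E | Switchable E A B q} := by simp only [card_filter, sum_product]

/-- A family of digraphs of maximum degree `D`, each with two marked vertex sets `A E` and `B E`,
that is stable under all switchings creating an edge from `A E` to `B E`; these must not affect the
marked sets. At least `α` edges leave `A E`, at least `β` edges enter `B E`, and at most `W` edges
do neither. -/
structure SwitchStable (C : Finset (Finset (V × V))) (A B : Finset (V × V) → Finset V)
    (D α β W : ℕ) : Prop where
  maxDegreeLE : ∀ E ∈ C, MaxDegreeLE E D
  le_card_tail : ∀ E ∈ C, α ≤ #{e ∈ E | e.1 ∈ A E}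
  le_card_head : ∀ E ∈ C, β ≤ #{e ∈ E | e.2 ∈ B E}
  card_le : ∀ E ∈ C, #{e ∈ E | e.1 ∉ A E ∧ e.2 ∉ B E} ≤ W
  switch : ∀ E ∈ C, ∀ q, Switchable E (A E) (B E) q →
    switchEdges E q ∈ C ∧ A (switchEdges E q) = A E ∧ B (switchEdges E q) = B E

namespace SwitchStable

variable {C : Finset (Finset (V × V))} {A B : Finset (V × V) → Finset V} {α β W : ℕ}

theorem card_mul_le_card_succ_mul (h : SwitchStable C A B D α β W) (i : ℕ) :
    #{E ∈ C | edgeCount E (A E) (B E) = i} * ((α - i) * (β - i - 3 * D ^ 2)) ≤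
      #{E ∈ C | edgeCount E (A E) (B E) = i + 1} * ((i + 1) * W) := by
  classical
  let φ : Finset (V × V) × ((V × V) × (V × V)) → Finset (V × V) × ((V × V) × (V × V)) :=
    fun p => (switchEdges p.1 p.2, swapHeads p.2)
  refine card_mul_le_card_mul_of_injOn
    (F := fun E => {q ∈ E ×ˢ E | Switchable E (A E) (B E) q})
    (G := fun E =>
      (E.filter fun e => e.1 ∈ A E ∧ e.2 ∈ B E) ×ˢ E.filter fun e => e.1 ∉ A E ∧ e.2 ∉ B E)
    φ ?_ (Set.LeftInvOn.injOn (f₁' := φ) ?_) (fun E hE => ?_) fun E hE => ?_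
  · rintro ⟨E, q⟩ ⟨hE, hq⟩
    obtain ⟨hE, hi⟩ := mem_filter.1 hE
    have hsw := (mem_filter.1 hq).2
    obtain ⟨hmem, hA, hB⟩ := h.switch E hE q hsw
    simp only [φ, swapHeads, Set.mem_ofPred_eq, mem_filter, mem_product, hmem, hA, hB,
      hsw.edgeCount_eq, hi, mem_switchEdges, hsw.tail_mem, hsw.head_mem, hsw.tail_notMem,
      hsw.head_notMem, true_or, or_true, not_false_iff, and_self]
  · rintro ⟨E, q⟩ ⟨-, hq⟩
    exact Prod.ext (mem_filter.1 hq).2.switchEdges_swapHeads rfl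
  · obtain ⟨hEC, rfl⟩ := mem_filter.1 hE
    refine le_trans ?_ ((h.maxDegreeLE E hEC).le_card_switchable (A E) (B E))
    gcongr
    exacts [h.le_card_tail E hEC, h.le_card_head E hEC]
  · obtain ⟨hE, hi⟩ := mem_filter.1 hE
    rw [card_product]
    exact Nat.mul_le_mul hi.le (h.card_le E hE)

theorem card_mul_descFactorial_mul_pow_le (h : SwitchStable C A B D α β W) {j H : ℕ}
    (hH : H + j + 3 * D ^ 2 ≤ β) :
    #{E ∈ C | edgeCount E (A E) (B E) = 0} * (α.descFactorial j * H ^ j) ≤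
      #{E ∈ C | edgeCount E (A E) (B E) = j} * (j.factorial * W ^ j) := by
  induction j with
  | zero => simp
  | succ j ih =>
    have hstep := h.card_mul_le_card_succ_mul j
    have hle : H ≤ β - j - 3 * D ^ 2 := by lia
    rw [Nat.descFactorial_succ, Nat.factorial_succ]
    calc _ = (#{E ∈ C | edgeCount E (A E) (B E) = 0} * (α.descFactorial j * H ^ j)) *
          ((α - j) * H) := by ring
      _ ≤ (#{E ∈ C | edgeCount E (A E) (B E) = j} * (j.factorial * W ^ j)) *
          ((α - j) * (β - j - 3 * D ^ 2)) :=
            Nat.mul_le_mul (ih (by lia)) (Nat.mul_le_mul_left _ hle)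
      _ = (#{E ∈ C | edgeCount E (A E) (B E) = j} * ((α - j) * (β - j - 3 * D ^ 2))) *
          (j.factorial * W ^ j) := by ring
      _ ≤ (#{E ∈ C | edgeCount E (A E) (B E) = j + 1} * ((j + 1) * W)) *
          (j.factorial * W ^ j) := by gcongr
      _ = _ := by ring

theorem card_mul_choose_mul_pow_le (h : SwitchStable C A B D α β W) {j H : ℕ}
    (hH : H + j + 3 * D ^ 2 ≤ β) :
    #{E ∈ C | edgeCount E (A E) (B E) = 0} * (α.choose j * H ^ j) ≤ #C * W ^ j := by
  refine Nat.le_of_mul_le_mul_left (c := j.factorial) ?_ j.factorial_pos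
  calc _ = #{E ∈ C | edgeCount E (A E) (B E) = 0} * (α.descFactorial j * H ^ j) := by
        rw [Nat.descFactorial_eq_factorial_mul_choose]; ring
    _ ≤ #{E ∈ C | edgeCount E (A E) (B E) = j} * (j.factorial * W ^ j) :=
        h.card_mul_descFactorial_mul_pow_le hH
    _ ≤ #C * (j.factorial * W ^ j) := by gcongr; exact filter_subset _ _
    _ = _ := by ring

end SwitchStable

end Switching

section Exploration

variable {V : Type*} [DecidableEq V]

/-- The set `P`, the root `u` and all out-neighbours of `P`. -/
def outClosure (E : Finset (V × V)) (u : V) (P : Finset V) : Finset V :=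
  insert u (P ∪ P.biUnion (outNeighbors E))

/-- `P` with one arbitrary element of `S \ P` added, if there is one. -/
noncomputable def insertNew (S P : Finset V) : Finset V :=
  open scoped Classical in if h : (S \ P).Nonempty then insert h.choose P else P

/-- The first `n` vertices processed by an exploration from `u` along out-edges. Each step depends
only on the set processed so far and the out-edges of this set, so a switching that keeps these
out-edges does not affect the exploration. -/
noncomputable def explore (E : Finset (V × V)) (u : V) : ℕ → Finset V
  | 0 => ∅
  | n + 1 => insertNew (outClosure E u (explore E u n)) (explore E u n)

/-- The vertices discovered in the first `n` steps of the exploration from `u`: the root, the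
processed vertices and their out-neighbours. -/
noncomputable def discovered (E : Finset (V × V)) (u : V) (n : ℕ) : Finset V :=
  outClosure E u (explore E u n)

/-- The vertices discovered but not processed in the first `n` steps of the exploration. -/
noncomputable def explorationFrontier (E : Finset (V × V)) (u : V) (n : ℕ) : Finset V :=
  discovered E u n \ explore E u n

variable {E E' : Finset (V × V)} {u : V} {P S : Finset V} {n : ℕ}

theorem mem_outClosure {b : V} : b ∈ outClosure E u P ↔ b = u ∨ b ∈ P ∨ ∃ a ∈ P, (a, b) ∈ E := by
  simp only [outClosure, mem_insert, mem_union, mem_biUnion, mem_outNeighbors]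

theorem subset_outClosure : P ⊆ outClosure E u P := fun _ h => mem_outClosure.2 (Or.inr (Or.inl h))

theorem subset_insertNew (S P : Finset V) : P ⊆ insertNew S P := by
  unfold insertNew
  split_ifs
  · exact subset_insert _ _
  · exact Subset.rfl

theorem insertNew_subset_union (S P : Finset V) : insertNew S P ⊆ S ∪ P := by
  unfold insertNew
  split_ifs with h
  · exact insert_subset (mem_union_left _ (mem_sdiff.1 h.choose_spec).1) subset_union_right
  · exact subset_union_right

theorem card_insertNew (h : (S \ P).Nonempty) : #(insertNew S P) = #P + 1 := by
  rw [insertNew, dif_pos h, card_insert_of_notMem (mem_sdiff.1 h.choose_spec).2]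

theorem explore_subset_discovered (E : Finset (V × V)) (u : V) (n : ℕ) :
    explore E u n ⊆ discovered E u n :=
  subset_outClosure

theorem outClosure_congr (h : ∀ a ∈ P, ∀ b, (a, b) ∈ E' ↔ (a, b) ∈ E) :
    outClosure E' u P = outClosure E u P := by
  ext b
  simp only [mem_outClosure]
  grind

theorem explore_congr (h : ∀ a ∈ explore E u n, ∀ b, (a, b) ∈ E' ↔ (a, b) ∈ E) :
    explore E' u n = explore E u n := by
  induction n with
  | zero => rfl
  | succ n ih =>
    have hn : ∀ a ∈ explore E u n, ∀ b, (a, b) ∈ E' ↔ (a, b) ∈ E :=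
      fun a ha => h a (subset_insertNew _ _ ha)
    rw [explore, explore, ih hn, outClosure_congr hn]

theorem discovered_congr (h : ∀ a ∈ explore E u n, ∀ b, (a, b) ∈ E' ↔ (a, b) ∈ E) :
    discovered E' u n = discovered E u n := by
  rw [discovered, explore_congr h, outClosure_congr h, discovered]

theorem explorationFrontier_congr (h : ∀ a ∈ explore E u n, ∀ b, (a, b) ∈ E' ↔ (a, b) ∈ E) :
    explorationFrontier E' u n = explorationFrontier E u n := by
  rw [explorationFrontier, discovered_congr h, explore_congr h, explorationFrontier]

theorem reachable_of_mem_outClosure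
    (hP : ∀ a ∈ P, Relation.ReflTransGen (fun a b => (a, b) ∈ E) u a) :
    ∀ b ∈ outClosure E u P, Relation.ReflTransGen (fun a b => (a, b) ∈ E) u b := by
  intro b hb
  rcases mem_outClosure.1 hb with rfl | hb | ⟨a, ha, hab⟩
  · exact .refl
  · exact hP b hb
  · exact (hP a ha).tail hab

theorem reachable_of_mem_explore :
    ∀ b ∈ explore E u n, Relation.ReflTransGen (fun a b => (a, b) ∈ E) u b := by
  induction n with
  | zero => simp [explore]
  | succ n ih =>
    intro b hb
    rcases mem_union.1 (insertNew_subset_union _ _ hb) with hb | hb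
    · exact reachable_of_mem_outClosure ih b hb
    · exact ih b hb

theorem reachable_of_mem_discovered :
    ∀ b ∈ discovered E u n, Relation.ReflTransGen (fun a b => (a, b) ∈ E) u b :=
  reachable_of_mem_outClosure reachable_of_mem_explore

theorem card_explore (h : ∀ P : Finset V, P.Nonempty → #P < n → ∃ a ∈ P, ∃ b ∉ P, (a, b) ∈ E) :
    #(explore E u n) = n := by
  induction n with
  | zero => rfl
  | succ n ih =>
    have hn := ih fun P hP hlt => h P hP (hlt.trans n.lt_succ_self)
    rw [explore, card_insertNew, hn]
    by_cases hu : u ∈ explore E u n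
    · obtain ⟨a, ha, b, hb, hab⟩ := h _ ⟨u, hu⟩ (hn.trans_lt n.lt_succ_self)
      exact ⟨b, mem_sdiff.2 ⟨mem_outClosure.2 (Or.inr (Or.inr ⟨a, ha, hab⟩)), hb⟩⟩
    · exact ⟨u, mem_sdiff.2 ⟨mem_outClosure.2 (Or.inl rfl), hu⟩⟩

end Exploration

section Connection

variable {V : Type*} {E : Finset (V × V)}

/-- Some `p` vertices send all their out-edges into a set of `r` vertices containing them. -/
def HasConfined (E : Finset (V × V)) (p r : ℕ) : Prop :=
  ∃ R P : Finset V, #R = r ∧ P ⊆ R ∧ #P = p ∧ ∀ a ∈ P, ∀ b ∉ R, (a, b) ∉ E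

/-- The obstructions to an exploration of `2 * m` vertices having a frontier of size `m`: it gets
stuck earlier in a closed set, or its `2 * m` vertices see fewer than `m` further ones. -/
def PoorlyExpanding (E : Finset (V × V)) (m : ℕ) : Prop :=
  (∃ r, 0 < r ∧ r < 2 * m ∧ HasConfined E r r) ∨ HasConfined E (2 * m) (3 * m)

theorem exists_edge_of_not_hasConfined {P R : Finset V} (hPR : P ⊆ R)
    (h : ¬HasConfined E #P #R) : ∃ a ∈ P, ∃ b ∉ R, (a, b) ∈ E := by
  by_contra! hno
  exact h ⟨R, P, rfl, hPR, rfl, hno⟩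

variable [DecidableEq V]

/-- The explorations of `E` along out-edges from `u` and along in-edges to `v` have not met after
`n` steps, and both frontiers have at least `m` vertices. -/
def SeparatedExplorations (E : Finset (V × V)) (u v : V) (n m : ℕ) : Prop :=
  Disjoint (discovered E u n) (discovered (reverseEdges E) v n) ∧
    m ≤ #(explorationFrontier E u n) ∧ m ≤ #(explorationFrontier (reverseEdges E) v n)

variable {u v : V} {m n r : ℕ}

theorem not_hasConfined_self (hloop : ∀ e ∈ E, e.1 ≠ e.2) (hdeg : ∀ v, r ≤ outDegree E v)
    (hr : 0 < r) : ¬HasConfined E r r := by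
  rintro ⟨R, P, hR, hPR, hP, hclosed⟩
  obtain rfl : P = R := eq_of_subset_of_card_le hPR (hR.trans hP.symm).le
  obtain ⟨a, ha⟩ := card_pos.1 (hP ▸ hr : 0 < #P)
  have hsub : outNeighbors E a ⊆ P.erase a := fun b hb => by
    rw [mem_outNeighbors] at hb
    exact mem_erase.2 ⟨(hloop _ hb).symm, by_contra fun hbP => hclosed a ha b hbP hb⟩
  have := (hdeg a).trans ((card_outNeighbors E a).symm.trans_le (card_le_card hsub))
  rw [card_erase_of_mem ha] at this
  lia

theorem le_card_explorationFrontier [Fintype V] (u : V) (hV : 3 * m ≤ Fintype.card V)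
    (h : ¬PoorlyExpanding E m) : m ≤ #(explorationFrontier E u (2 * m)) := by
  obtain ⟨hclosed, hexp⟩ := not_or.1 h
  have hexplore : #(explore E u (2 * m)) = 2 * m :=
    card_explore fun P hP hlt => exists_edge_of_not_hasConfined Subset.rfl fun hconf =>
      hclosed ⟨_, card_pos.2 hP, hlt, hconf⟩
  have hsub := explore_subset_discovered E u (2 * m)
  by_contra! hlt
  rw [explorationFrontier, card_sdiff_of_subset hsub, hexplore] at hlt
  obtain ⟨R, hR, -, hRcard⟩ := exists_subsuperset_card_eq (subset_univ (discovered E u (2 * m)))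
    (by lia : _ ≤ 3 * m) (by rwa [card_univ])
  obtain ⟨a, ha, b, hb, hab⟩ := exists_edge_of_not_hasConfined (E := E) (hsub.trans hR)
    (by rwa [hexplore, hRcard])
  exact hb (hR (mem_outClosure.2 (Or.inr (Or.inr ⟨a, ha, hab⟩))))

theorem reachable_root_of_mem_discovered_reverseEdges {b : V}
    (hb : b ∈ discovered (reverseEdges E) v n) :
    Relation.ReflTransGen (fun a b => (a, b) ∈ E) b v := by
  rw [← Relation.reflTransGen_swap]
  exact Relation.ReflTransGen.mono (fun _ _ => mem_reverseEdges.1) _ _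
    (reachable_of_mem_discovered b hb)

theorem disjoint_discovered_of_not_reachable
    (huv : ¬Relation.ReflTransGen (fun a b => (a, b) ∈ E) u v) :
    Disjoint (discovered E u n) (discovered (reverseEdges E) v n) :=
  disjoint_left.2 fun b hb hb' => huv
    ((reachable_of_mem_discovered b hb).trans (reachable_root_of_mem_discovered_reverseEdges hb'))

theorem edgeCount_explorationFrontier_of_not_reachable
    (huv : ¬Relation.ReflTransGen (fun a b => (a, b) ∈ E) u v) :
    edgeCount E (explorationFrontier E u n) (explorationFrontier (reverseEdges E) v n) = 0 :=
  edgeCount_eq_zero_iff.2 fun a ha _ hb hab => huv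
    (((reachable_of_mem_discovered a (mem_sdiff.1 ha).1).tail hab).trans
      (reachable_root_of_mem_discovered_reverseEdges (mem_sdiff.1 hb).1))

theorem separatedExplorations_of_not_reachable [Fintype V] (hV : 3 * m ≤ Fintype.card V)
    (h : ¬PoorlyExpanding E m) (hrev : ¬PoorlyExpanding (reverseEdges E) m)
    (huv : ¬Relation.ReflTransGen (fun a b => (a, b) ∈ E) u v) :
    SeparatedExplorations E u v (2 * m) m :=
  ⟨disjoint_discovered_of_not_reachable huv, le_card_explorationFrontier u hV h,
    le_card_explorationFrontier v hV hrev⟩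

theorem SeparatedExplorations.out_edges_switchEdges (h : SeparatedExplorations E u v n m)
    {q : (V × V) × (V × V)}
    (hq : Switchable E (explorationFrontier E u n) (explorationFrontier (reverseEdges E) v n) q) :
    ∀ a ∈ explore E u n, ∀ b, (a, b) ∈ switchEdges E q ↔ (a, b) ∈ E := by
  intro a ha b
  have hfst : a ≠ q.1.1 := fun heq => (mem_sdiff.1 hq.tail_mem).2 (heq ▸ ha)
  have hsnd : a ≠ q.2.1 := fun heq => disjoint_left.1 h.1
    (mem_outClosure.2 (Or.inr (Or.inr ⟨a, ha, heq ▸ hq.snd_mem⟩))) (mem_sdiff.1 hq.head_mem).1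
  simp [mem_switchEdges, Prod.ext_iff, hfst, hsnd]

theorem SeparatedExplorations.in_edges_switchEdges (h : SeparatedExplorations E u v n m)
    {q : (V × V) × (V × V)}
    (hq : Switchable E (explorationFrontier E u n) (explorationFrontier (reverseEdges E) v n) q) :
    ∀ b ∈ explore (reverseEdges E) v n, ∀ a,
      (b, a) ∈ reverseEdges (switchEdges E q) ↔ (b, a) ∈ reverseEdges E := by
  intro b hb a
  have hsnd : b ≠ q.2.2 := fun heq => (mem_sdiff.1 hq.head_mem).2 (heq ▸ hb)
  have hfst : b ≠ q.1.2 := fun heq => disjoint_left.1 h.1 (mem_sdiff.1 hq.tail_mem).1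
    (mem_outClosure.2 (Or.inr (Or.inr ⟨b, hb, mem_reverseEdges.2 (heq ▸ hq.fst_mem)⟩)))
  simp [mem_reverseEdges, mem_switchEdges, Prod.ext_iff, hfst, hsnd]

theorem SeparatedExplorations.switchEdges (h : SeparatedExplorations E u v n m)
    {q : (V × V) × (V × V)}
    (hq : Switchable E (explorationFrontier E u n) (explorationFrontier (reverseEdges E) v n) q) :
    SeparatedExplorations (switchEdges E q) u v n m := by
  have hout := h.out_edges_switchEdges hq
  have hin := h.in_edges_switchEdges hq
  rwa [SeparatedExplorations, discovered_congr hout, discovered_congr hin,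
    explorationFrontier_congr hout, explorationFrontier_congr hin]

end Connection

section Dicores

variable {k1 k2 N M D : ℕ} {E : Finset (Fin N × Fin N)} {Q Q' : Finset (Fin N × Fin N) → Prop}

open scoped Classical in
/-- The finite set of `(k1,k2)`-dicores on `Fin N` with `M` edges that satisfy `Q`; for `Q = ⊤` this
is the set of all dicores. -/
noncomputable def dicores (k1 k2 N M : ℕ) (Q : Finset (Fin N × Fin N) → Prop) :
    Finset (Finset (Fin N × Fin N)) :=
  {E | IsDicore k1 k2 N M E ∧ Q E}

theorem mem_dicores : E ∈ dicores k1 k2 N M Q ↔ IsDicore k1 k2 N M E ∧ Q E := by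
  simp [dicores]

theorem natCard_subtype_isDicore_and (k1 k2 N M : ℕ) (Q : Finset (Fin N × Fin N) → Prop) :
    Nat.card {E // IsDicore k1 k2 N M E ∧ Q E} = #(dicores k1 k2 N M Q) :=
  Nat.subtype_card _ fun _ => mem_dicores

theorem natCard_subtype_isDicore (k1 k2 N M : ℕ) :
    Nat.card {E // IsDicore k1 k2 N M E} = #(dicores k1 k2 N M ⊤) :=
  Nat.subtype_card _ fun _ => by simp [mem_dicores]

theorem dicores_mono (h : ∀ E, IsDicore k1 k2 N M E → Q E → Q' E) :
    dicores k1 k2 N M Q ⊆ dicores k1 k2 N M Q' := fun E hE => by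
  rw [mem_dicores] at hE ⊢
  exact ⟨hE.1, h E hE.1 hE.2⟩

theorem card_dicores_le (Q : Finset (Fin N × Fin N) → Prop) :
    #(dicores k1 k2 N M Q) ≤ #(dicores k1 k2 N M ⊤) :=
  card_le_card (dicores_mono fun _ _ _ => trivial)

theorem filter_dicores [DecidablePred Q'] :
    {E ∈ dicores k1 k2 N M Q | Q' E} = dicores k1 k2 N M fun E => Q E ∧ Q' E := by
  ext E
  simp only [mem_filter, mem_dicores, and_assoc]

theorem card_dicores_or_le (Q Q' : Finset (Fin N × Fin N) → Prop) :
    #(dicores k1 k2 N M fun E => Q E ∨ Q' E) ≤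
      #(dicores k1 k2 N M Q) + #(dicores k1 k2 N M Q') := by
  refine (card_le_card fun E hE => ?_).trans (card_union_le _ _)
  simpa only [mem_union, mem_dicores, and_or_left] using hE

theorem card_dicores_exists_le {ι : Type*} {s : Finset ι}
    {Q : ι → Finset (Fin N × Fin N) → Prop} {b : ℝ}
    (h : ∀ i ∈ s, (#(dicores k1 k2 N M (Q i)) : ℝ) ≤ b) :
    (#(dicores k1 k2 N M fun E => ∃ i ∈ s, Q i E) : ℝ) ≤ #s * b := by
  have hsub : (dicores k1 k2 N M fun E => ∃ i ∈ s, Q i E) ⊆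
      s.biUnion fun i => dicores k1 k2 N M (Q i) := fun E hE => by
    obtain ⟨hdicore, i, hi, hQ⟩ := mem_dicores.1 hE
    exact mem_biUnion.2 ⟨i, hi, mem_dicores.2 ⟨hdicore, hQ⟩⟩
  calc (#(dicores k1 k2 N M fun E => ∃ i ∈ s, Q i E) : ℝ)
      ≤ ∑ i ∈ s, (#(dicores k1 k2 N M (Q i)) : ℝ) := by
        exact_mod_cast (card_le_card hsub).trans card_biUnion_le
    _ ≤ #s * b := nsmul_eq_mul #s b ▸ sum_le_card_nsmul _ _ _ h

theorem IsDicore.reverseEdges (hE : IsDicore k1 k2 N M E) :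
    IsDicore k2 k1 N M (reverseEdges E) := by
  obtain ⟨hcard, hloop, hdeg⟩ := hE
  refine ⟨(card_image_of_injective _ Prod.swap_injective).trans hcard, ?_, fun v => ⟨?_, ?_⟩⟩
  · exact fun e he => (hloop (e.2, e.1) (mem_reverseEdges.1 he)).symm
  · exact (hdeg v).2.trans (inDegree_reverseEdges E v).ge
  · exact (hdeg v).1.trans (outDegree_reverseEdges E v).ge

theorem card_dicores_comp_reverseEdges (Q : Finset (Fin N × Fin N) → Prop) :
    #(dicores k1 k2 N M (Q ∘ reverseEdges)) = #(dicores k2 k1 N M Q) := by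
  refine card_nbij' reverseEdges reverseEdges (fun E hE => ?_) (fun E hE => ?_)
    (fun E _ => reverseEdges_reverseEdges E) fun E _ => reverseEdges_reverseEdges E
  all_goals
    obtain ⟨hdicore, hQ⟩ := mem_dicores.1 (mem_coe.1 hE)
    refine mem_coe.2 (mem_dicores.2 ⟨hdicore.reverseEdges, ?_⟩)
  · exact hQ
  · rwa [Function.comp_apply, reverseEdges_reverseEdges]

theorem IsDicore.mul_le (hE : IsDicore k1 k2 N M E) : k1 * N ≤ M := by
  have := mul_le_card_filter_mem (s := E) (t := univ) (g := Prod.snd) fun v _ => (hE.2.2 v).1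
  simpa [hE.1, mul_comm] using this

theorem IsDicore.switchEdges {A B : Finset (Fin N)} (hAB : Disjoint A B)
    (hE : IsDicore k1 k2 N M E) {q : (Fin N × Fin N) × (Fin N × Fin N)}
    (hq : Switchable E A B q) : IsDicore k1 k2 N M (switchEdges E q) := by
  obtain ⟨hcard, hloop, hdeg⟩ := hE
  refine ⟨hq.card_eq.trans hcard, fun e he => ?_, fun v => ⟨?_, ?_⟩⟩
  · rcases mem_switchEdges.1 he with h | rfl | rfl
    · exact hloop e h.1
    · exact fun heq : q.1.1 = q.2.2 => disjoint_left.1 hAB hq.tail_mem (heq ▸ hq.head_mem)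
    · exact hq.not_loop
  · exact (hdeg v).1.trans (hq.inDegree_eq v).ge
  · exact (hdeg v).2.trans (hq.outDegree_eq v).ge

end Dicores

section DegreeTail

variable {k1 k2 N M : ℕ} {E : Finset (Fin N × Fin N)} {a v w : Fin N}

/-- The digraph with the edge `(a, v)` replaced by `(a, w)`. -/
def redirectEdge (E : Finset (Fin N × Fin N)) (a v w : Fin N) : Finset (Fin N × Fin N) :=
  (E \ {(a, v)}) ∪ {(a, w)}

theorem mem_redirectEdge_self : (a, w) ∈ redirectEdge E a v w :=
  mem_union_right _ (mem_singleton_self _)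

theorem redirectEdge_redirectEdge (hav : (a, v) ∈ E) (haw : (a, w) ∉ E) :
    redirectEdge (redirectEdge E a v w) a w v = E := by
  rw [redirectEdge, redirectEdge, union_sdiff_cancel_right, sdiff_union_of_subset]
  · exact singleton_subset_iff.2 hav
  · exact (disjoint_singleton_right.2 haw).mono_left sdiff_subset

theorem card_filter_redirectEdge_add (hav : (a, v) ∈ E) (haw : (a, w) ∉ E)
    (p : Fin N × Fin N → Prop) [DecidablePred p] :
    #{e ∈ redirectEdge E a v w | p e} + (if p (a, v) then 1 else 0) =
      #{e ∈ E | p e} + (if p (a, w) then 1 else 0) := by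
  have := card_filter_sdiff_union_add (singleton_subset_iff.2 hav)
    (disjoint_singleton_right.2 haw) p
  rwa [card_filter p {(a, v)}, card_filter p {(a, w)}, sum_singleton, sum_singleton] at this

theorem le_inDegree_redirectEdge (hav : (a, v) ∈ E) (haw : (a, w) ∉ E) {d : ℕ}
    (hd : d + 1 ≤ inDegree E v) : d ≤ inDegree (redirectEdge E a v w) v := by
  have := card_filter_redirectEdge_add hav haw fun e => e.2 = v
  simp only [if_true] at this
  unfold inDegree at hd ⊢
  lia

theorem IsDicore.redirectEdge (hE : IsDicore k1 k2 N M E) (hav : (a, v) ∈ E) (haw : (a, w) ∉ E)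
    (hne : a ≠ w) (hv : k1 + 1 ≤ inDegree E v) : IsDicore k1 k2 N M (redirectEdge E a v w) := by
  obtain ⟨hcard, hloop, hdeg⟩ := hE
  refine ⟨?_, fun e he => ?_, fun u => ⟨?_, ?_⟩⟩
  · have := card_filter_redirectEdge_add hav haw fun _ => True
    simp only [filter_true, if_true, hcard, add_left_inj] at this
    exact this
  · rcases mem_union.1 he with he | he
    · exact hloop e (mem_sdiff.1 he).1
    · rwa [mem_singleton.1 he]
  · rcases eq_or_ne v u with rfl | huv
    · exact le_inDegree_redirectEdge hav haw hv
    · have := card_filter_redirectEdge_add hav haw fun e => e.2 = u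
      rw [if_neg huv] at this
      have := (hdeg u).1
      lia
  · have := card_filter_redirectEdge_add hav haw fun e => e.1 = u
    have := (hdeg u).2
    lia

theorem card_dicores_le_inDegree_mul_le (v : Fin N) {d : ℕ} (hd : k1 ≤ d) :
    #(dicores k1 k2 N M (d + 1 ≤ inDegree · v)) * ((d + 1) * (N - 1) - M) ≤
      #(dicores k1 k2 N M (d ≤ inDegree · v)) * M := by
  let F : Finset (Fin N × Fin N) → Finset (Fin N × Fin N) :=
    fun E => (inNeighbors E v ×ˢ univ) \ (E ∪ (inNeighbors E v).diag)
  have hF {E e} : e ∈ F E ↔ (e.1, v) ∈ E ∧ e ∉ E ∧ e.1 ≠ e.2 := by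
    simp only [F, mem_sdiff, mem_product, mem_univ, mem_union, mem_diag, mem_inNeighbors]
    tauto
  refine card_mul_le_card_mul_of_injOn (F := F) (G := id)
    (fun p => (redirectEdge p.1 p.2.1 v p.2.2, p.2)) ?_
    (Set.LeftInvOn.injOn (f₁' := fun p => (redirectEdge p.1 p.2.1 p.2.2 v, p.2)) ?_)
    (fun E hE => ?_) fun E hE => (mem_dicores.1 hE).1.1.le
  · rintro ⟨E, a, w⟩ ⟨hE, hp⟩
    obtain ⟨hdicore, hdeg⟩ := mem_dicores.1 hE
    obtain ⟨hav, haw, hne⟩ := hF.1 hp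
    exact ⟨mem_dicores.2 ⟨hdicore.redirectEdge hav haw hne (le_trans (by lia) hdeg),
      le_inDegree_redirectEdge hav haw hdeg⟩, mem_redirectEdge_self⟩
  · rintro ⟨E, a, w⟩ ⟨-, hp⟩
    obtain ⟨hav, haw, -⟩ := hF.1 hp
    exact Prod.ext (redirectEdge_redirectEdge hav haw) rfl
  · obtain ⟨hdicore, hdeg⟩ := mem_dicores.1 hE
    rw [← card_inNeighbors] at hdeg
    have hdiff := le_card_sdiff (E ∪ (inNeighbors E v).diag) (inNeighbors E v ×ˢ univ)
    have hunion := card_union_le E (inNeighbors E v).diag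
    rw [diag_card, hdicore.1] at hunion
    rw [card_product, card_univ, Fintype.card_fin] at hdiff
    have hmul := Nat.mul_le_mul_right (N - 1) hdeg
    rw [Nat.mul_sub #(inNeighbors E v), mul_one] at hmul
    lia

theorem card_dicores_add_le_inDegree_mul_pow_le (v : Fin N) {d U : ℕ} (hd : k1 ≤ d)
    (hU : U + M ≤ (d + 1) * (N - 1)) (j : ℕ) :
    #(dicores k1 k2 N M (d + j ≤ inDegree · v)) * U ^ j ≤ #(dicores k1 k2 N M ⊤) * M ^ j := by
  induction j with
  | zero => simpa using card_dicores_le _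
  | succ j ih =>
    have hstep := card_dicores_le_inDegree_mul_le (k2 := k2) (M := M) v
      (hd.trans (d.le_add_right j))
    have hUj : U ≤ (d + j + 1) * (N - 1) - M := by
      have : (d + 1) * (N - 1) ≤ (d + j + 1) * (N - 1) := Nat.mul_le_mul_right _ (by lia)
      lia
    calc _ = #(dicores k1 k2 N M (d + j + 1 ≤ inDegree · v)) * U * U ^ j := by ring_nf
      _ ≤ #(dicores k1 k2 N M (d + j ≤ inDegree · v)) * M * U ^ j := by
          gcongr ?_ * _
          exact (Nat.mul_le_mul_left _ hUj).trans hstep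
      _ = #(dicores k1 k2 N M (d + j ≤ inDegree · v)) * U ^ j * M := by ring
      _ ≤ #(dicores k1 k2 N M ⊤) * M ^ j * M := by gcongr
      _ = _ := by ring

end DegreeTail

section SwitchingBounds

variable {k1 k2 N M D : ℕ}

theorem card_dicores_edgeCount_compl_mul_pow_le {H : ℕ} {P R : Finset (Fin N)} (hPR : P ⊆ R)
    (hH : H + #P * k2 + 3 * D ^ 2 + #R * D ≤ M) :
    #(dicores k1 k2 N M fun E => MaxDegreeLE E D ∧ edgeCount E P Rᶜ = 0) * H ^ (#P * k2) ≤
      #(dicores k1 k2 N M ⊤) * (#R * D) ^ (#P * k2) := by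
  have hdisj : Disjoint P Rᶜ := disjoint_compl_right.mono_left hPR
  have hstable : SwitchStable (dicores k1 k2 N M (MaxDegreeLE · D)) (fun _ => P) (fun _ => Rᶜ) D
      (#P * k2) (M - #R * D) (#R * D) := by
    refine ⟨fun E hE => (mem_dicores.1 hE).2, fun E hE => ?_, fun E hE => ?_, fun E hE => ?_,
      fun E hE q hq => ⟨?_, rfl, rfl⟩⟩ <;> obtain ⟨hdicore, hdeg⟩ := mem_dicores.1 hE
    · exact mul_le_card_filter_mem fun v _ => (hdicore.2.2 v).2
    · have := hdeg.card_filter_head_le R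
      have := card_filter_add_card_filter_not (s := E) fun e => e.2 ∈ R
      simp only [mem_compl, ← hdicore.1]
      lia
    · refine (card_le_card fun e he => ?_).trans (hdeg.card_filter_head_le R)
      simp only [mem_filter, mem_compl, not_not] at he ⊢
      exact ⟨he.1, he.2.2⟩
    · exact mem_dicores.2 ⟨hdicore.switchEdges hdisj hq, hq.maxDegreeLE hdeg⟩
  have := hstable.card_mul_choose_mul_pow_le (j := #P * k2) (H := H) (by lia)
  rw [filter_dicores, Nat.choose_self, one_mul] at this
  exact this.trans (Nat.mul_le_mul_right _ (card_dicores_le _))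

theorem card_dicores_hasConfined_le {H p r : ℕ} (hH : H + p * k2 + 3 * D ^ 2 + r * D ≤ M)
    (hHpos : 0 < H) :
    (#(dicores k1 k2 N M fun E => MaxDegreeLE E D ∧ HasConfined E p r) : ℝ) ≤
      N.choose r * r.choose p * (#(dicores k1 k2 N M ⊤) * (r * D / H : ℝ) ^ (p * k2)) := by
  let T := (powersetCard r (univ : Finset (Fin N))).sigma (powersetCard p)
  have hT : #T = N.choose r * r.choose p := by
    rw [card_sigma, sum_congr rfl fun R hR => by rw [card_powersetCard, (mem_powersetCard.1 hR).2],
      sum_const, card_powersetCard, card_univ, Fintype.card_fin, smul_eq_mul]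
  have hpair : ∀ s ∈ T, (#(dicores k1 k2 N M fun E => MaxDegreeLE E D ∧ edgeCount E s.2 s.1ᶜ = 0) :
      ℝ) ≤ #(dicores k1 k2 N M ⊤) * (r * D / H : ℝ) ^ (p * k2) := by
    rintro ⟨R, P⟩ hs
    obtain ⟨hR, hP⟩ := mem_sigma.1 hs
    obtain ⟨hPR, rfl⟩ := mem_powersetCard.1 hP
    obtain ⟨-, rfl⟩ := mem_powersetCard.1 hR
    rw [div_pow, mul_div_assoc', le_div_iff₀ (by positivity)]
    exact_mod_cast card_dicores_edgeCount_compl_mul_pow_le hPR hH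
  have hunion := card_dicores_exists_le hpair
  rw [hT, Nat.cast_mul] at hunion
  refine le_trans (Nat.cast_le.2 (card_le_card (dicores_mono fun E _ h => ?_))) hunion
  obtain ⟨hdeg, R, P, hR, hPR, hP, hclosed⟩ := h
  refine ⟨⟨R, P⟩, by simp [T, mem_powersetCard, hR, hPR, hP], hdeg, ?_⟩
  exact edgeCount_eq_zero_iff.2 fun a ha b hb => hclosed a ha b (mem_compl.1 hb)

theorem card_dicores_separatedExplorations_mul_le {u v : Fin N} {n m j H : ℕ}
    (hH : H + j + 3 * D ^ 2 ≤ m * k1) :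
    #(dicores k1 k2 N M fun E => (MaxDegreeLE E D ∧ SeparatedExplorations E u v n m) ∧
        edgeCount E (explorationFrontier E u n) (explorationFrontier (reverseEdges E) v n) = 0) *
      ((m * k2).choose j * H ^ j) ≤ #(dicores k1 k2 N M ⊤) * M ^ j := by
  have hstable : SwitchStable
      (dicores k1 k2 N M fun E => MaxDegreeLE E D ∧ SeparatedExplorations E u v n m)
      (explorationFrontier · u n) (fun E => explorationFrontier (reverseEdges E) v n)
      D (m * k2) (m * k1) M := by
    refine ⟨fun E hE => (mem_dicores.1 hE).2.1, fun E hE => ?_, fun E hE => ?_, fun E hE => ?_,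
      fun E hE q hq => ?_⟩ <;> obtain ⟨hdicore, hdeg, hsep⟩ := mem_dicores.1 hE
    · exact (Nat.mul_le_mul_right _ hsep.2.1).trans
        (mul_le_card_filter_mem fun w _ => (hdicore.2.2 w).2)
    · exact (Nat.mul_le_mul_right _ hsep.2.2).trans
        (mul_le_card_filter_mem fun w _ => (hdicore.2.2 w).1)
    · exact (card_filter_le _ _).trans hdicore.1.le
    · have hdisj := hsep.1.mono (sdiff_subset (t := explore E u n))
        (sdiff_subset (t := explore (reverseEdges E) v n))
      exact ⟨mem_dicores.2
          ⟨hdicore.switchEdges hdisj hq, hq.maxDegreeLE hdeg, hsep.switchEdges hq⟩,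
        explorationFrontier_congr (hsep.out_edges_switchEdges hq),
        explorationFrontier_congr (hsep.in_edges_switchEdges hq)⟩
  have := hstable.card_mul_choose_mul_pow_le hH
  rw [filter_dicores] at this
  exact this.trans (Nat.mul_le_mul_right _ (card_dicores_le _))

end SwitchingBounds

section Rarity

variable {k1 k2 s : ℕ} {C1 : ℝ} {Q Q' : ∀ N, Finset (Fin N × Fin N) → Prop}

/-- Among the `(k1,k2)`-dicores on `N` vertices with between `2 * N` and `C1 * N` edges, those
satisfying `Q` are a proportion `O(N⁻ˢ)`. -/
def IsRare (k1 k2 : ℕ) (C1 : ℝ) (s : ℕ) (Q : ∀ N, Finset (Fin N × Fin N) → Prop) : Prop :=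
  ∃ c : ℝ, ∀ᶠ N : ℕ in Filter.atTop, ∀ M : ℕ, 2 * N ≤ M → (M : ℝ) ≤ C1 * N →
    (#(dicores k1 k2 N M (Q N)) : ℝ) ≤ c * (#(dicores k1 k2 N M ⊤) / (N : ℝ) ^ s)

theorem IsRare.or (h : IsRare k1 k2 C1 s Q) (h' : IsRare k1 k2 C1 s Q') :
    IsRare k1 k2 C1 s fun N E => Q N E ∨ Q' N E := by
  obtain ⟨c, hc⟩ := h
  obtain ⟨c', hc'⟩ := h'
  refine ⟨c + c', ?_⟩
  filter_upwards [hc, hc'] with N hN hN' M h2 hM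
  rw [add_mul]
  exact le_trans (by exact_mod_cast card_dicores_or_le (Q N) (Q' N))
    (add_le_add (hN M h2 hM) (hN' M h2 hM))

theorem IsRare.mono (h : IsRare k1 k2 C1 s Q')
    (hQ : ∀ᶠ N in Filter.atTop, ∀ M E, IsDicore k1 k2 N M E → Q N E → Q' N E) :
    IsRare k1 k2 C1 s Q := by
  obtain ⟨c, hc⟩ := h
  refine ⟨c, ?_⟩
  filter_upwards [hc, hQ] with N hN hQN M h2 hM
  exact (Nat.cast_le.2 (card_le_card (dicores_mono (hQN M)))).trans (hN M h2 hM)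

theorem IsRare.reverse (h : IsRare k2 k1 C1 s Q) :
    IsRare k1 k2 C1 s fun N => Q N ∘ reverseEdges := by
  obtain ⟨c, hc⟩ := h
  refine ⟨c, ?_⟩
  filter_upwards [hc] with N hN M h2 hM
  rw [card_dicores_comp_reverseEdges, ← card_dicores_comp_reverseEdges ⊤]
  exact hN M h2 hM

theorem IsRare.mono_exponent {s' : ℕ} (h : IsRare k1 k2 C1 s Q) (hs : s' ≤ s) :
    IsRare k1 k2 C1 s' Q := by
  obtain ⟨c, hc⟩ := h
  refine ⟨|c|, ?_⟩
  filter_upwards [hc, Filter.eventually_ge_atTop 1] with N hN hN1 M h2 hM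
  have : (1 : ℝ) ≤ N := Nat.one_le_cast.2 hN1
  refine (hN M h2 hM).trans ?_
  gcongr
  exact le_abs_self c

theorem IsRare.exists_forall_card_le (h : IsRare k1 k2 C1 s Q) (hk1 : 2 ≤ k1) :
    ∃ C : ℝ, 0 < C ∧ ∀ N M : ℕ, 0 < N → (M : ℝ) ≤ C1 * N →
      (#(dicores k1 k2 N M (Q N)) : ℝ) ≤ C * #(dicores k1 k2 N M ⊤) / (N : ℝ) ^ s := by
  obtain ⟨c, hc⟩ := h
  obtain ⟨N₀, hN₀⟩ := Filter.eventually_atTop.1 hc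
  refine ⟨|c| + N₀ ^ s + 1, by positivity, fun N M hN hM => ?_⟩
  rcases lt_or_ge M (2 * N) with hlt | h2
  · have hempty : #(dicores k1 k2 N M (Q N)) = 0 :=
      card_eq_zero.2 <| eq_empty_of_forall_notMem fun E hE => by
        have := (Nat.mul_le_mul_right N hk1).trans (mem_dicores.1 hE).1.mul_le
        lia
    rw [hempty, Nat.cast_zero]
    positivity
  rcases le_or_gt N₀ N with hle | hlt
  · refine (hN₀ N hle M h2 hM).trans ?_
    rw [← mul_div_assoc]
    gcongr
    have := le_abs_self c
    have : (0 : ℝ) ≤ (N₀ : ℝ) ^ s := by positivity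
    linarith
  · rw [le_div_iff₀ (by positivity), mul_comm]
    have : (N : ℝ) ^ s ≤ (N₀ : ℝ) ^ s := by gcongr
    gcongr
    · linarith [abs_nonneg c]
    · exact dicores_mono fun _ _ _ => trivial

end Rarity

section Scale

/-- The `32`nd root of `N`: a degree bound so small that its fixed powers are negligible. -/
noncomputable def vertexScale (N : ℕ) : ℝ := (N : ℝ) ^ ((32 : ℕ) : ℝ)⁻¹

theorem vertexScale_pow (N : ℕ) : vertexScale N ^ 32 = N :=
  Real.rpow_inv_natCast_pow N.cast_nonneg (by norm_num)

theorem eventually_le_vertexScale (x₀ : ℝ) : ∀ᶠ N in Filter.atTop, x₀ ≤ vertexScale N :=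
  ((tendsto_rpow_atTop (by norm_num)).comp tendsto_natCast_atTop_atTop).eventually_ge_atTop x₀

/-- The cap imposed on all degrees of a typical dicore. -/
noncomputable def degreeCap (N : ℕ) : ℕ := ⌊vertexScale N⌋₊

/-- The frontier size, about `N ^ (3/4)`, aimed at when exploring twice as many vertices: large
compared with `√N`, so that two frontiers are likely to be joined, but `o(N)`. -/
noncomputable def exploreSize (N : ℕ) : ℕ := ⌊vertexScale N ^ 24⌋₊

variable {k1 k2 N M j p r : ℕ} {C1 x : ℝ}

theorem card_dicores_floor_lt_inDegree_le (v : Fin N) (hx : x ^ 32 = N) (hC1 : 0 < C1)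
    (hM : (M : ℝ) ≤ C1 * N) (hjx : 2 * j + 2 * k1 + 8 * C1 + 2 ≤ x) :
    (#(dicores k1 k2 N M (⌊x⌋₊ < inDegree · v)) : ℝ) ≤
      #(dicores k1 k2 N M ⊤) * (8 * C1 / x) ^ j := by
  have hx2 : 2 ≤ x := le_trans (le_add_of_nonneg_left (by positivity)) hjx
  have hN2 : (2 : ℝ) ≤ N := hx ▸ hx2.trans (le_self_pow₀ (by linarith) (by norm_num))
  have hfloor := Nat.lt_floor_add_one x
  obtain ⟨d, hd⟩ : ∃ d, d + j = ⌊x⌋₊ + 1 :=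
    ⟨⌊x⌋₊ + 1 - j, Nat.sub_add_cancel (by exact_mod_cast (by linarith : (j : ℝ) ≤ ⌊x⌋₊ + 1))⟩
  have hd' : (d : ℝ) + j = ⌊x⌋₊ + 1 := by exact_mod_cast hd
  have hkd : k1 ≤ d := by exact_mod_cast (by linarith : (k1 : ℝ) ≤ d)
  have hcount : x * N / 4 ≤ (((d + 1) * (N - 1) : ℕ) : ℝ) := by
    rw [Nat.cast_mul, Nat.cast_sub (by exact_mod_cast one_le_two.trans hN2)]
    push_cast
    calc x * N / 4 = x / 2 * (N / 2) := by ring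
      _ ≤ (d + 1) * (N - 1) := by gcongr <;> linarith
  have hMx : (M : ℝ) ≤ x * N / 8 := hM.trans <| by
    rw [mul_div_right_comm]
    gcongr
    linarith
  obtain ⟨U, hU⟩ : ∃ U, U + M = (d + 1) * (N - 1) := by
    refine ⟨_, Nat.sub_add_cancel (Nat.cast_le (α := ℝ).1 (le_trans ?_ hcount))⟩
    linarith [(Nat.cast_nonneg M).trans hMx]
  have hUx : x * N / 8 ≤ (U : ℝ) := by
    rw [← hU, Nat.cast_add] at hcount
    linarith
  have hbound := card_dicores_add_le_inDegree_mul_pow_le (k2 := k2) v hkd hU.le j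
  simp only [hd, Nat.succ_le_iff] at hbound
  calc (#(dicores k1 k2 N M (⌊x⌋₊ < inDegree · v)) : ℝ)
      ≤ #(dicores k1 k2 N M ⊤) * M ^ j / U ^ j := by
        rw [le_div_iff₀ (pow_pos (lt_of_lt_of_le (by positivity) hUx) j)]
        exact_mod_cast hbound
    _ ≤ #(dicores k1 k2 N M ⊤) * (C1 * N) ^ j / (x * N / 8) ^ j := by gcongr
    _ = #(dicores k1 k2 N M ⊤) * (8 * C1 / x) ^ j := by
        rw [mul_div_assoc, ← div_pow]
        congr 2
        field_simp

theorem isRare_degreeCap_lt_inDegree (k1 k2 s : ℕ) (hC1 : 0 < C1) :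
    IsRare k1 k2 C1 s fun N E => ∃ v, degreeCap N < inDegree E v := by
  let j := 32 * (s + 1)
  refine ⟨(8 * C1) ^ j, ?_⟩
  filter_upwards [eventually_le_vertexScale (2 * j + 2 * k1 + 8 * C1 + 2),
    Filter.eventually_gt_atTop 0] with N hx hN M _ hM
  have hunion := card_dicores_exists_le (s := univ) fun v _ =>
    card_dicores_floor_lt_inDegree_le (k2 := k2) v (vertexScale_pow N) hC1 hM hx
  simp only [mem_univ, true_and, card_univ, Fintype.card_fin] at hunion
  refine hunion.trans_eq ?_
  rw [div_pow, pow_mul (vertexScale N), vertexScale_pow, pow_succ]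
  field_simp

theorem add_mul_add_le_of_scale (hx : x ^ 32 = N) (hx2 : 2 ≤ x) (hk2x : k2 ≤ x) (hMN : 2 * N ≤ M)
    (hp : p ≤ 2 * ⌊x ^ 24⌋₊) (hr : r ≤ 3 * ⌊x ^ 24⌋₊) :
    N + p * k2 + 3 * ⌊x⌋₊ ^ 2 + r * ⌊x⌋₊ ≤ M := by
  have hx0 : 0 ≤ x := by linarith
  have hx1 : 1 ≤ x := by linarith
  have hfloor : (⌊x⌋₊ : ℝ) ≤ x := Nat.floor_le hx0
  have hfloor24 : (⌊x ^ 24⌋₊ : ℝ) ≤ x ^ 24 := Nat.floor_le (by positivity)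
  have hpx : (p : ℝ) ≤ 2 * x ^ 24 := le_trans (Nat.cast_le.2 hp) (by push_cast; gcongr)
  have hrx : (r : ℝ) ≤ 3 * x ^ 24 := le_trans (Nat.cast_le.2 hr) (by push_cast; gcongr)
  have hsmall : (p : ℝ) * k2 + 3 * (⌊x⌋₊ : ℝ) ^ 2 + r * ⌊x⌋₊ ≤ N :=
    calc (p : ℝ) * k2 + 3 * (⌊x⌋₊ : ℝ) ^ 2 + r * ⌊x⌋₊
        ≤ 2 * x ^ 24 * x + 3 * x ^ 2 + 3 * x ^ 24 * x := by gcongr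
      _ ≤ 2 * x ^ 24 * x + 3 * x ^ 25 + 3 * x ^ 24 * x := by
          gcongr _ + 3 * ?_ + _
          exact pow_le_pow_right₀ hx1 (by norm_num)
      _ = 2 ^ 3 * x ^ 25 := by ring
      _ ≤ x ^ 3 * x ^ 25 := by gcongr
      _ = x ^ 28 := by ring
      _ ≤ x ^ 32 := pow_le_pow_right₀ hx1 (by norm_num)
      _ = N := hx
  have : p * k2 + 3 * ⌊x⌋₊ ^ 2 + r * ⌊x⌋₊ ≤ N := by exact_mod_cast hsmall
  lia

theorem card_dicores_hasConfined_le_of_scale (hx : x ^ 32 = N) (hx2 : 2 ≤ x) (hk2x : k2 ≤ x)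
    (hMN : 2 * N ≤ M) (hr0 : 0 < r) (hp : p ≤ 2 * ⌊x ^ 24⌋₊) (hr : r ≤ 3 * ⌊x ^ 24⌋₊) :
    (#(dicores k1 k2 N M fun E => MaxDegreeLE E ⌊x⌋₊ ∧ HasConfined E p r) : ℝ) ≤
      #(dicores k1 k2 N M ⊤) *
        ((3 * N / r : ℝ) ^ r * r.choose p * (r * x / N : ℝ) ^ (p * k2)) := by
  have hx0 : 0 < x := by linarith
  have hN : 0 < N := by
    rw [← Nat.cast_pos (α := ℝ), ← hx]
    positivity
  refine (card_dicores_hasConfined_le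
    (add_mul_add_le_of_scale hx hx2 hk2x hMN hp hr) hN).trans ?_
  rw [mul_left_comm]
  gcongr
  · exact choose_le_three_mul_div_pow N hr0
  · exact Nat.floor_le hx0.le

theorem card_dicores_expansionFailure_le {m : ℕ} (hm : m = ⌊x ^ 24⌋₊) (hm0 : 0 < m)
    (hx : x ^ 32 = N) (hx10 : 10 ≤ x) (hk2 : 2 ≤ k2) (hk2x : k2 ≤ x) (hMN : 2 * N ≤ M) :
    (#(dicores k1 k2 N M fun E => MaxDegreeLE E ⌊x⌋₊ ∧ HasConfined E (2 * m) (3 * m)) : ℝ) ≤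
      #(dicores k1 k2 N M ⊤) * (1 / x) ^ m := by
  have hx0 : 0 < x := by linarith
  have hN : (0 : ℝ) < N := hx ▸ by positivity
  have hmx : (m : ℝ) ≤ x ^ 24 := hm ▸ Nat.floor_le (by positivity)
  have hm0' : (0 : ℝ) < m := Nat.cast_pos.2 hm0
  have hratio : ((3 * m : ℕ) : ℝ) * x / N ≤ 1 := by
    rw [div_le_one hN, ← hx]
    push_cast
    calc 3 * (m : ℝ) * x ≤ x * x ^ 24 * x := by gcongr; linarith
      _ = x ^ 26 := by ring
      _ ≤ x ^ 32 := pow_le_pow_right₀ (by linarith) (by norm_num)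
  refine (card_dicores_hasConfined_le_of_scale hx (by linarith) hk2x hMN (by lia)
    (by lia) (by lia)).trans ?_
  gcongr
  calc (3 * N / (3 * m : ℕ) : ℝ) ^ (3 * m) * (3 * m).choose (2 * m) *
        ((3 * m : ℕ) * x / N : ℝ) ^ (2 * m * k2)
      ≤ (3 * N / (3 * m : ℕ) : ℝ) ^ (3 * m) * 2 ^ (3 * m) *
        ((3 * m : ℕ) * x / N : ℝ) ^ (2 * m * 2) := by
        gcongr _ * ?_ * ?_
        · exact_mod_cast Nat.choose_le_two_pow _ _
        · exact pow_le_pow_of_le_one (by positivity) hratio (Nat.mul_le_mul_left _ hk2)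
    _ = (648 * m * x ^ 4 / N) ^ m := by
        rw [pow_mul, pow_mul, show 2 * m * 2 = 4 * m by ring, pow_mul, ← mul_pow, ← mul_pow]
        push_cast
        congr 1
        field_simp
        norm_num
    _ ≤ (1 / x) ^ m := by
        gcongr ?_ ^ _
        rw [div_le_div_iff₀ hN hx0, ← hx]
        calc 648 * (m : ℝ) * x ^ 4 * x ≤ 10 ^ 3 * x ^ 24 * x ^ 4 * x := by gcongr; norm_num
          _ ≤ x ^ 3 * x ^ 24 * x ^ 4 * x := by gcongr
          _ = 1 * x ^ 32 := by ring

theorem isRare_expansionFailure (k1 s : ℕ) (C1 : ℝ) (hk2 : 2 ≤ k2) :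
    IsRare k1 k2 C1 s fun N E => MaxDegreeLE E (degreeCap N) ∧
      HasConfined E (2 * exploreSize N) (3 * exploreSize N) := by
  refine ⟨1, ?_⟩
  filter_upwards [eventually_le_vertexScale (32 * (s + 1) + k2 + 10)] with N hx M hMN _
  have hx10 : 10 ≤ vertexScale N := le_trans (le_add_of_nonneg_left (by positivity)) hx
  have hx0 : 0 < vertexScale N := by linarith
  have hsize : 32 * (s + 1) ≤ exploreSize N := Nat.le_floor <| by
    push_cast
    exact le_trans (by linarith) (le_self_pow₀ (by linarith : 1 ≤ vertexScale N) (by norm_num))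
  refine (card_dicores_expansionFailure_le rfl (by lia : 0 < exploreSize N) (vertexScale_pow N)
    hx10 hk2 (by linarith) hMN).trans ?_
  rw [one_mul, ← mul_one_div (#(dicores k1 k2 N M ⊤) : ℝ)]
  gcongr
  calc (1 / vertexScale N) ^ exploreSize N ≤ (1 / vertexScale N) ^ (32 * s) :=
        pow_le_pow_of_le_one (by positivity) ((div_le_one hx0).2 (by linarith)) (by lia)
    _ = 1 / (N : ℝ) ^ s := by rw [one_div_pow, pow_mul, vertexScale_pow]

theorem card_dicores_closed_le (hx : x ^ 32 = N) (hx2 : 2 ≤ x) (hk2 : 1 ≤ k2) (hk2x : k2 ≤ x)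
    (hMN : 2 * N ≤ M) (hr0 : 0 < r) (hr : r ≤ 2 * ⌊x ^ 24⌋₊) :
    (#(dicores k1 k2 N M fun E => MaxDegreeLE E ⌊x⌋₊ ∧ HasConfined E r r) : ℝ) ≤
      #(dicores k1 k2 N M ⊤) * (3 * x * (r * x / N) ^ (k2 - 1)) ^ r := by
  have hN : (0 : ℝ) < N := hx ▸ by positivity
  have : (0 : ℝ) < r := Nat.cast_pos.2 hr0
  refine (card_dicores_hasConfined_le_of_scale hx hx2 hk2x hMN hr0 hr (by lia)).trans_eq ?_
  obtain ⟨l, rfl⟩ := Nat.exists_eq_add_of_le' hk2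
  rw [Nat.choose_self, Nat.cast_one, mul_one, mul_comm r, pow_mul, ← mul_pow, pow_succ,
    Nat.add_sub_cancel]
  congr 2
  field_simp

theorem closed_bound_le_of_three_le {l r₀ : ℕ} (hx : x ^ 32 = N) (hx1 : 1 ≤ x) (hl : 1 ≤ l)
    (hr3 : 3 ≤ r) (hr : r ≤ r₀) :
    (3 * x * (r * x / N : ℝ) ^ l) ^ r ≤ (3 * (r₀ : ℝ) ^ l) ^ r₀ * (1 / (N : ℝ) ^ (2 * l)) := by
  have hN : (0 : ℝ) < N := hx ▸ by positivity
  have hz1 : x ^ (l + 1) / (N : ℝ) ^ l ≤ 1 := by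
    rw [div_le_one (by positivity), ← hx, ← pow_mul]
    exact pow_le_pow_right₀ hx1 (by lia)
  have hz3 : (x ^ (l + 1) / (N : ℝ) ^ l) ^ 3 ≤ 1 / (N : ℝ) ^ (2 * l) := by
    rw [div_pow, div_le_div_iff₀ (by positivity) (by positivity), ← hx]
    simp only [← pow_mul, ← pow_add, one_mul]
    exact pow_le_pow_right₀ hx1 (by lia)
  have hbase : (1 : ℝ) ≤ 3 * (r₀ : ℝ) ^ l := by
    have : (1 : ℝ) ≤ (r₀ : ℝ) ^ l := one_le_pow₀ (Nat.one_le_cast.2 (by lia))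
    linarith
  calc (3 * x * (r * x / N : ℝ) ^ l) ^ r
      ≤ (3 * x * (r₀ * x / N : ℝ) ^ l) ^ r := by gcongr
    _ = (3 * (r₀ : ℝ) ^ l) ^ r * (x ^ (l + 1) / (N : ℝ) ^ l) ^ r := by
        rw [← mul_pow, div_pow, mul_pow, pow_succ]
        ring
    _ ≤ (3 * (r₀ : ℝ) ^ l) ^ r₀ * (x ^ (l + 1) / (N : ℝ) ^ l) ^ 3 := by
        gcongr ?_ * ?_
        · exact pow_le_pow_right₀ hbase hr
        · exact pow_le_pow_of_le_one (by positivity) hz1 hr3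
    _ ≤ _ := by gcongr

theorem closed_base_le_one_div {l : ℕ} (hx : x ^ 32 = N) (hx10 : 10 ≤ x) (hl : 1 ≤ l)
    (hr : r ≤ 2 * ⌊x ^ 24⌋₊) : 3 * x * (r * x / N : ℝ) ^ l ≤ 1 / x := by
  have hx1 : 1 ≤ x := by linarith
  have hN : (0 : ℝ) < N := hx ▸ by positivity
  have hratio : (r * x / N : ℝ) ≤ 2 / x ^ 7 := by
    rw [div_le_div_iff₀ hN (by positivity), ← hx]
    have hrx : (r : ℝ) ≤ 2 * x ^ 24 := (Nat.cast_le.2 hr).trans <| by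
      push_cast
      gcongr
      exact Nat.floor_le (by positivity)
    calc (r : ℝ) * x * x ^ 7 ≤ 2 * x ^ 24 * x * x ^ 7 := by gcongr
      _ = 2 * x ^ 32 := by ring
  have hratio1 : (2 : ℝ) / x ^ 7 ≤ 1 :=
    (div_le_one (by positivity)).2 (le_trans (by linarith) (le_self_pow₀ hx1 (by norm_num)))
  calc 3 * x * (r * x / N : ℝ) ^ l ≤ 3 * x * (r * x / N) := by
        gcongr
        exact pow_le_of_le_one (by positivity) (hratio.trans hratio1) (by lia)
    _ ≤ 3 * x * (2 / x ^ 7) := by gcongr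
    _ = 6 / x ^ 6 := by
        field_simp
        norm_num
    _ ≤ x ^ 5 / x ^ 6 := by
        gcongr
        exact le_trans (by linarith) (le_self_pow₀ hx1 (by norm_num))
    _ = 1 / x := by field_simp

theorem isRare_closed_of_lt (k1 r₀ : ℕ) (C1 : ℝ) (hk2 : 2 ≤ k2) :
    IsRare k1 k2 C1 (2 * (k2 - 1)) fun N E =>
      ∃ r ∈ Ico 3 r₀, MaxDegreeLE E (degreeCap N) ∧ HasConfined E r r := by
  refine ⟨#(Ico 3 r₀) * (3 * (r₀ : ℝ) ^ (k2 - 1)) ^ r₀, ?_⟩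
  filter_upwards [eventually_le_vertexScale (r₀ + k2 + 10)] with N hx M hMN _
  have : 10 ≤ vertexScale N := le_trans (le_add_of_nonneg_left (by positivity)) hx
  have hsize : r₀ ≤ exploreSize N := Nat.le_floor <|
    le_trans (by linarith) (le_self_pow₀ (by linarith : 1 ≤ vertexScale N) (by norm_num))
  rw [mul_assoc, ← mul_one_div, mul_left_comm ((3 * (r₀ : ℝ) ^ (k2 - 1)) ^ r₀)]
  refine card_dicores_exists_le fun r hr => ?_
  obtain ⟨hr3, hr⟩ := mem_Ico.1 hr
  refine (card_dicores_closed_le (vertexScale_pow N) (by linarith) (by lia) (by linarith) hMN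
    (by lia) (hr.le.trans (hsize.trans (Nat.le_mul_of_pos_left _ two_pos)))).trans ?_
  gcongr
  exact closed_bound_le_of_three_le (vertexScale_pow N) (by linarith) (by lia) hr3 hr.le

theorem isRare_closed_of_ge (k1 s : ℕ) (C1 : ℝ) (hk2 : 2 ≤ k2) :
    IsRare k1 k2 C1 s fun N E => ∃ r ∈ Ico (32 * (s + 1)) (2 * exploreSize N),
      MaxDegreeLE E (degreeCap N) ∧ HasConfined E r r := by
  refine ⟨1, ?_⟩
  filter_upwards [eventually_le_vertexScale (k2 + 10)] with N hx M hMN _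
  have hx10 : 10 ≤ vertexScale N := le_trans (le_add_of_nonneg_left (by positivity)) hx
  have hx0 : 0 < vertexScale N := by linarith
  have hN : (0 : ℝ) < N := vertexScale_pow N ▸ by positivity
  have hcard : (#(Ico (32 * (s + 1)) (2 * exploreSize N)) : ℝ) ≤ N := by
    rw [Nat.card_Ico, ← vertexScale_pow N]
    calc ((2 * exploreSize N - 32 * (s + 1) : ℕ) : ℝ) ≤ 2 * exploreSize N := by
          exact_mod_cast Nat.sub_le _ _
      _ ≤ vertexScale N * vertexScale N ^ 24 := by
          gcongr
          · linarith
          · exact Nat.floor_le (by positivity)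
      _ = vertexScale N ^ 25 := by ring
      _ ≤ vertexScale N ^ 32 := pow_le_pow_right₀ (by linarith) (by norm_num)
  have hbound : ∀ r ∈ Ico (32 * (s + 1)) (2 * exploreSize N),
      (#(dicores k1 k2 N M fun E => MaxDegreeLE E (degreeCap N) ∧ HasConfined E r r) : ℝ) ≤
        #(dicores k1 k2 N M ⊤) * (1 / (N : ℝ) ^ (s + 1)) := fun r hr => by
    obtain ⟨hsr, hr⟩ := mem_Ico.1 hr
    refine (card_dicores_closed_le (vertexScale_pow N) (by linarith) (by lia) (by linarith) hMN
      (by lia) hr.le).trans ?_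
    gcongr
    calc _ ≤ (1 / vertexScale N) ^ r := by
          gcongr ?_ ^ _
          exact closed_base_le_one_div (vertexScale_pow N) hx10 (by lia) hr.le
      _ ≤ (1 / vertexScale N) ^ (32 * (s + 1)) :=
          pow_le_pow_of_le_one (by positivity) ((div_le_one hx0).2 (by linarith)) hsr
      _ = 1 / (N : ℝ) ^ (s + 1) := by rw [one_div_pow, pow_mul, vertexScale_pow]
  calc _ ≤ _ := card_dicores_exists_le hbound
    _ ≤ N * (#(dicores k1 k2 N M ⊤) * (1 / (N : ℝ) ^ (s + 1))) := by gcongr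
    _ = _ := by
        rw [pow_succ]
        field_simp

theorem isRare_closed (k1 : ℕ) (C1 : ℝ) (hk2 : 2 ≤ k2) :
    IsRare k1 k2 C1 (2 * (k2 - 1)) fun N E => MaxDegreeLE E (degreeCap N) ∧
      ∃ r, 0 < r ∧ r < 2 * exploreSize N ∧ HasConfined E r r := by
  have hsmall := isRare_closed_of_lt k1 (32 * (2 * (k2 - 1) + 1)) C1 hk2
  refine (hsmall.or (isRare_closed_of_ge k1 _ C1 hk2)).mono
    (.of_forall fun N M E hE ⟨hdeg, r, hr0, hr, hconf⟩ => ?_)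
  have hr3 : 3 ≤ r := by
    by_contra! hr3
    exact not_hasConfined_self hE.2.1 (fun v => le_trans (by lia) (hE.2.2 v).2) hr0 hconf
  rcases lt_or_ge r (32 * (2 * (k2 - 1) + 1)) with hlt | hge
  · exact Or.inl ⟨r, mem_Ico.2 ⟨hr3, hlt⟩, hdeg, hconf⟩
  · exact Or.inr ⟨r, mem_Ico.2 ⟨hge, hr⟩, hdeg, hconf⟩

theorem isRare_poorlyExpanding (k1 : ℕ) (C1 : ℝ) (hk2 : 2 ≤ k2) :
    IsRare k1 k2 C1 (2 * (k2 - 1)) fun N E =>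
      MaxDegreeLE E (degreeCap N) ∧ PoorlyExpanding E (exploreSize N) :=
  ((isRare_closed k1 C1 hk2).or (isRare_expansionFailure k1 _ C1 hk2)).mono
    (.of_forall fun _ _ _ _ h => and_or_left.1 h)

theorem pow_le_factorial_mul_choose {m n : ℕ} (h : m + j ≤ n + 1) :
    m ^ j ≤ j.factorial * n.choose j := by
  rw [← Nat.descFactorial_eq_factorial_mul_choose]
  exact (Nat.pow_le_pow_left (by lia) j).trans (Nat.pow_sub_le_descFactorial n j)

theorem half_pow_le_floor (hx : 2 ≤ x) : x ^ 24 / 2 ≤ ⌊x ^ 24⌋₊ := by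
  have := Nat.lt_floor_add_one (x ^ 24)
  have : x ≤ x ^ 24 := le_self_pow₀ (by linarith) (by norm_num)
  linarith

theorem add_three_mul_sq_le_floor (hx : 10 ≤ x) (hj : j ≤ x) :
    j + 3 * ⌊x⌋₊ ^ 2 ≤ ⌊x ^ 24⌋₊ := by
  have hx1 : 1 ≤ x := by linarith
  have : (j : ℝ) + 3 * (⌊x⌋₊ : ℝ) ^ 2 ≤ ⌊x ^ 24⌋₊ :=
    calc (j : ℝ) + 3 * (⌊x⌋₊ : ℝ) ^ 2 ≤ x ^ 2 + 3 * x ^ 2 := by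
          gcongr
          · exact hj.trans (le_self_pow₀ hx1 (by norm_num))
          · exact Nat.floor_le (by linarith)
      _ = 8 * x ^ 2 / 2 := by ring
      _ ≤ x * x ^ 2 / 2 := by
          gcongr
          linarith
      _ = x ^ 3 / 2 := by ring
      _ ≤ x ^ 24 / 2 := by
          gcongr ?_ / _
          exact pow_le_pow_right₀ hx1 (by norm_num)
      _ ≤ ⌊x ^ 24⌋₊ := half_pow_le_floor (by linarith)
  exact_mod_cast this

theorem card_dicores_separatedExplorations_le_of_scale {u v : Fin N} {m n : ℕ}
    (hm : m = ⌊x ^ 24⌋₊) (hx : x ^ 32 = N) (hx10 : 10 ≤ x) (hj : j ≤ x) (hk1 : 2 ≤ k1)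
    (hk2 : 2 ≤ k2) (hM : (M : ℝ) ≤ C1 * N) :
    (#(dicores k1 k2 N M fun E => (MaxDegreeLE E ⌊x⌋₊ ∧ SeparatedExplorations E u v n m) ∧
        edgeCount E (explorationFrontier E u n) (explorationFrontier (reverseEdges E) v n) = 0) :
      ℝ) ≤ #(dicores k1 k2 N M ⊤) * (j.factorial * (4 * C1 / x ^ 16) ^ j) := by
  have : 0 < x := by linarith
  have hjm := hm ▸ add_three_mul_sq_le_floor hx10 hj
  have hmx : x ^ 24 / 2 ≤ m := hm ▸ half_pow_le_floor (by linarith)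
  have hm1 : m * 2 ≤ m * k1 := Nat.mul_le_mul_left m hk1
  have hm2 : m * 2 ≤ m * k2 := Nat.mul_le_mul_left m hk2
  have hbound := card_dicores_separatedExplorations_mul_le (k1 := k1) (k2 := k2) (M := M)
    (D := ⌊x⌋₊) (u := u) (v := v) (n := n) (m := m) (j := j) (H := m) (by lia)
  have hchoose : m ^ j ≤ j.factorial * (m * k2).choose j :=
    pow_le_factorial_mul_choose (by lia)
  set B := #(dicores k1 k2 N M fun E =>
    (MaxDegreeLE E ⌊x⌋₊ ∧ SeparatedExplorations E u v n m) ∧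
      edgeCount E (explorationFrontier E u n) (explorationFrontier (reverseEdges E) v n) = 0)
  have hswitch : (B : ℝ) * (x ^ 48 / 4) ^ j ≤
      j.factorial * (#(dicores k1 k2 N M ⊤) * (C1 * N) ^ j) :=
    calc (B : ℝ) * (x ^ 48 / 4) ^ j = B * ((x ^ 24 / 2) ^ j * (x ^ 24 / 2) ^ j) := by
          rw [← mul_pow]
          ring
      _ ≤ B * ((m : ℝ) ^ j * (m : ℝ) ^ j) := by gcongr
      _ ≤ B * (j.factorial * (m * k2).choose j * (m : ℝ) ^ j) := by
          gcongr
          exact_mod_cast hchoose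
      _ = j.factorial * (B * ((m * k2).choose j * (m : ℝ) ^ j)) := by ring
      _ ≤ j.factorial * (#(dicores k1 k2 N M ⊤) * (M : ℝ) ^ j) := by
          gcongr _ * ?_
          exact_mod_cast hbound
      _ ≤ _ := by gcongr
  rw [← le_div_iff₀ (by positivity)] at hswitch
  refine hswitch.trans_eq ?_
  rw [mul_left_comm, mul_div_assoc, mul_div_assoc, ← div_pow, ← hx]
  congr 3
  field_simp

theorem isRare_separatedExplorations (s : ℕ) (C1 : ℝ) (hk1 : 2 ≤ k1) (hk2 : 2 ≤ k2) :
    IsRare k1 k2 C1 s fun N E => MaxDegreeLE E (degreeCap N) ∧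
      ∃ u v, SeparatedExplorations E u v (2 * exploreSize N) (exploreSize N) ∧
        edgeCount E (explorationFrontier E u (2 * exploreSize N))
          (explorationFrontier (reverseEdges E) v (2 * exploreSize N)) = 0 := by
  let j := 2 * (s + 2)
  refine ⟨j.factorial * (4 * C1) ^ j, ?_⟩
  filter_upwards [eventually_le_vertexScale (j + 10)] with N hx M _ hM
  have hx10 : 10 ≤ vertexScale N := le_trans (le_add_of_nonneg_left (by positivity)) hx
  have hx0 : 0 < vertexScale N := by linarith
  have hN : (0 : ℝ) < N := vertexScale_pow N ▸ by positivity
  have hunion := card_dicores_exists_le (s := (univ : Finset (Fin N × Fin N))) fun q _ =>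
    card_dicores_separatedExplorations_le_of_scale (u := q.1) (v := q.2)
      (n := 2 * exploreSize N) (rfl : exploreSize N = _) (vertexScale_pow N) hx10
      (by linarith : (j : ℝ) ≤ vertexScale N) hk1 hk2 hM
  refine (Nat.cast_le.2 (card_le_card (dicores_mono fun E _ h => ?_))).trans (hunion.trans_eq ?_)
  · obtain ⟨hdeg, u, v, hsep, hno⟩ := h
    exact ⟨(u, v), mem_univ _, ⟨hdeg, hsep⟩, hno⟩
  · have hpow : (vertexScale N ^ 16) ^ j = (N : ℝ) ^ s * N ^ 2 := by
      rw [← pow_add, ← vertexScale_pow, ← pow_mul, ← pow_mul]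
      congr 1
      lia
    rw [div_pow, hpow, card_univ, Fintype.card_prod, Fintype.card_fin]
    push_cast
    field_simp

theorem eventually_three_mul_exploreSize_le : ∀ᶠ N in Filter.atTop, 3 * exploreSize N ≤ N := by
  filter_upwards [eventually_le_vertexScale 3] with N hx
  have : (3 : ℝ) * exploreSize N ≤ N := by
    rw [← vertexScale_pow N]
    calc (3 : ℝ) * exploreSize N ≤ vertexScale N * vertexScale N ^ 24 := by
          gcongr
          exact Nat.floor_le (by positivity)
      _ = vertexScale N ^ 25 := by ring
      _ ≤ vertexScale N ^ 32 := pow_le_pow_right₀ (by linarith) (by norm_num)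
  exact_mod_cast this

end Scale

theorem isRare_not_stronglyConnected {k1 k2 : ℕ} {C1 : ℝ} (hk1 : 2 ≤ k1) (hk2 : 2 ≤ k2)
    (hC1 : 0 < C1) :
    IsRare k1 k2 C1 (2 * (min k1 k2 - 1)) fun _ E => ¬StronglyConnected E := by
  have hdeg := isRare_degreeCap_lt_inDegree k1 k2 (2 * (min k1 k2 - 1)) hC1
  have hdeg' := (isRare_degreeCap_lt_inDegree k2 k1 (2 * (min k1 k2 - 1)) hC1).reverse
  have hexp := (isRare_poorlyExpanding k1 C1 hk2).mono_exponent
    (by lia : 2 * (min k1 k2 - 1) ≤ _)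
  have hexp' := (isRare_poorlyExpanding k2 C1 hk1).reverse.mono_exponent
    (by lia : 2 * (min k1 k2 - 1) ≤ _)
  have hsep := isRare_separatedExplorations (2 * (min k1 k2 - 1)) C1 hk1 hk2
  refine ((hdeg.or hdeg').or ((hexp.or hexp').or hsep)).mono ?_
  filter_upwards [eventually_three_mul_exploreSize_le] with N hV M E _ hconn
  refine or_iff_not_imp_left.2 fun hcap => or_iff_not_imp_left.2 fun hgood => ?_
  have hmax : MaxDegreeLE E (degreeCap N) := fun v => by
    rw [← inDegree_reverseEdges]
    exact ⟨not_lt.1 fun h => hcap (Or.inl ⟨v, h⟩), not_lt.1 fun h => hcap (Or.inr ⟨v, h⟩)⟩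
  obtain ⟨u, v, huv⟩ : ∃ u v, ¬Relation.ReflTransGen (fun a b => (a, b) ∈ E) u v := by
    by_contra! h
    exact hconn h
  refine ⟨hmax, u, v, separatedExplorations_of_not_reachable (hV.trans_eq (Fintype.card_fin N).symm)
    (fun h => hgood (Or.inl ⟨hmax, h⟩)) (fun h => hgood (Or.inr ⟨hmax.reverseEdges, h⟩)) huv,
    edgeCount_explorationFrontier_of_not_reachable huv⟩

theorem strongly_connected_dicore_count_general (k1 k2 : ℕ) (hk1 : 2 ≤ k1) (hk2 : 2 ≤ k2)
    (C1 : ℝ) :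
    ∃ C : ℝ, 0 < C ∧ ∀ N M : ℕ, 0 < N → (M : ℝ) ≤ C1 * N →
      (Nat.card {E : Finset (Fin N × Fin N) //
          IsDicore k1 k2 N M E ∧ ¬ StronglyConnected E} : ℝ) ≤
        C * (Nat.card {E : Finset (Fin N × Fin N) // IsDicore k1 k2 N M E} : ℝ) /
          (N : ℝ) ^ (2 * (min k1 k2 - 1)) := by
  have hC1 : 0 < max C1 1 := by positivity
  obtain ⟨C, hC, h⟩ := (isRare_not_stronglyConnected hk1 hk2 hC1).exists_forall_card_le hk1
  refine ⟨C, hC, fun N M hN hM => ?_⟩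
  rw [natCard_subtype_isDicore_and, natCard_subtype_isDicore]
  exact h N M hN (hM.trans (by gcongr; exact le_max_left _ _))

theorem strongly_connected_dicore_count
    (k1 k2 : ℕ) (hk1 : 2 ≤ k1) (hk2 : 2 ≤ k2) (ε C1 : ℝ) (hε : 0 < ε)
    (hC1 : ((max k1 k2 : ℕ) : ℝ) + ε < C1) :
    ∃ C : ℝ, 0 < C ∧ ∀ N M : ℕ, 0 < N → 0 < M →
      (((max k1 k2 : ℕ) : ℝ) + ε) * N ≤ M → (M : ℝ) ≤ C1 * N →
      (Nat.card {E : Finset (Fin N × Fin N) //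
          IsDicore k1 k2 N M E ∧ ¬ StronglyConnected E} : ℝ) ≤
        C * (Nat.card {E : Finset (Fin N × Fin N) // IsDicore k1 k2 N M E} : ℝ) /
          (N : ℝ) ^ (2 * (min k1 k2 - 1)) := by
  obtain ⟨C, hC, h⟩ := strongly_connected_dicore_count_general k1 k2 hk1 hk2 C1
  exact ⟨C, hC, fun N M hN _ _ hM => h N M hN hM⟩
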